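/- arXiv:2307.12703 — 3 statements merged into one kernel-verified Lean document; each statement's English description precedes it below -/
import Mathlib

section
/- Let g : ℝ → ℝ be twice continuously differentiable such that g, g' and g'' all have at most polynomial growth. Then the function φ_g is differentiable at every ρ ∈ (−1,1) and its derivative is given by φ_g'(ρ) = ∫∫ g'(x) g'(ρx + √(1−ρ²) y) dγ(x) dγ(y). -/
open MeasureTheory ProbabilityTheory

/-- `h` has at most polynomial growth. -/
def PolyGrowth (h : ℝ → ℝ) : Prop :=
  ∃ C > (0 : ℝ), ∃ m : ℕ, ∀ x : ℝ, |h x| ≤ C * (1 + |x|) ^ m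

/-- The correlation functional `φ_g`. -/
noncomputable def phiCorr (g : ℝ → ℝ) (ρ : ℝ) : ℝ :=
  ∫ x, ∫ y, g x * g (ρ * x + Real.sqrt (1 - ρ ^ 2) * y)
    ∂(gaussianReal 0 1) ∂(gaussianReal 0 1)

/-!
Let `X` and `W` be independent standard Gaussians, put `ρ = cos θ` and rotate:
`Y = cos θ X + sin θ W`, `Z = -sin θ X + cos θ W`. Then `Y = ρ X + √(1 - ρ²) W`, the `θ`-derivative
of `Y` is `Z`, and rotation invariance of the Gaussian makes `Y` and `Z` independent.
Differentiating under the expectation gives `d/dθ 𝔼[f(X) g(Y)] = 𝔼[f(X) g'(Y) Z]`; since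
`X = cos θ Y - sin θ Z`, Stein's identity in the variable `Z` alone turns this into
`-sin θ 𝔼[f'(X) g'(Y)]`, so that no second derivative appears. The chain rule along
`θ = arccos ρ` cancels the factor `-sin θ`.
-/

open Asymptotics Filter
open scoped NNReal

local notation "Rot" => ContinuousLinearMap.rotation

section Stein

variable {m : ℝ} {v : ℝ≥0}

lemma integrable_gaussianReal_iff_integrable_mul_gaussianPDFReal (hv : v ≠ 0) {f : ℝ → ℝ} :
    Integrable f (gaussianReal m v) ↔ Integrable (fun x ↦ f x * gaussianPDFReal m v x) := by
  rw [gaussianReal_of_var_ne_zero m hv,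
    integrable_withDensity_iff (measurable_gaussianPDF m v)
      (ae_of_all _ fun _ ↦ gaussianPDF_lt_top)]
  simp only [toReal_gaussianPDF]

lemma hasDerivAt_gaussianPDFReal (m : ℝ) (v : ℝ≥0) (x : ℝ) :
    HasDerivAt (gaussianPDFReal m v) (-(x - m) / v * gaussianPDFReal m v x) x := by
  have h_exponent : HasDerivAt (fun x : ℝ ↦ -(x - m) ^ 2 / (2 * v)) (-(x - m) / v) x :=
    ((((hasDerivAt_id' x).sub_const m).fun_pow 2).fun_neg.div_const (2 * (v : ℝ))).congr_deriv
      (by ring)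
  exact (h_exponent.exp.const_mul _).congr_deriv (by rw [gaussianPDFReal]; ring)

theorem integral_sub_mean_mul_gaussianReal {f f' : ℝ → ℝ} (hf : ∀ x, HasDerivAt f (f' x) x)
    (hf_int : Integrable f (gaussianReal m v)) (hf'_int : Integrable f' (gaussianReal m v))
    (hxf_int : Integrable (fun x ↦ (x - m) * f x) (gaussianReal m v)) :
    ∫ x, (x - m) * f x ∂gaussianReal m v = v * ∫ x, f' x ∂gaussianReal m v := by
  rcases eq_or_ne v 0 with rfl | hv
  · simp
  have hv' : (v : ℝ) ≠ 0 := mod_cast hv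
  have h_int : Integrable (fun x ↦ v * f' x - (x - m) * f x) (gaussianReal m v) :=
    (hf'_int.const_mul _).sub hxf_int
  have h_deriv (x : ℝ) : HasDerivAt (fun x ↦ v * f x * gaussianPDFReal m v x)
      ((v * f' x - (x - m) * f x) * gaussianPDFReal m v x) x :=
    (((hf x).const_mul (v : ℝ)).mul (hasDerivAt_gaussianPDFReal m v x)).congr_deriv
      (by field_simp; ring)
  have h_zero : ∫ x, (v * f' x - (x - m) * f x) ∂gaussianReal m v = 0 := by
    simpa only [integral_gaussianReal_eq_integral_smul hv, smul_eq_mul, mul_comm] using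
      integral_eq_zero_of_hasDerivAt_of_integrable h_deriv
        ((integrable_gaussianReal_iff_integrable_mul_gaussianPDFReal hv).1 h_int)
        ((integrable_gaussianReal_iff_integrable_mul_gaussianPDFReal hv).1 (hf_int.const_mul _))
  rw [integral_sub (hf'_int.const_mul _) hxf_int, integral_const_mul] at h_zero
  linarith

theorem integral_snd_sub_mean_mul_prod_gaussianReal {α : Type*} [MeasurableSpace α]
    {μ : Measure α} [SFinite μ] {F F' : α × ℝ → ℝ}
    (hF : ∀ x y, HasDerivAt (fun t ↦ F (x, t)) (F' (x, y)) y)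
    (hF_int : Integrable F (μ.prod (gaussianReal m v)))
    (hF'_int : Integrable F' (μ.prod (gaussianReal m v)))
    (hyF_int : Integrable (fun z ↦ (z.2 - m) * F z) (μ.prod (gaussianReal m v))) :
    ∫ z, (z.2 - m) * F z ∂μ.prod (gaussianReal m v) = v * ∫ z, F' z ∂μ.prod (gaussianReal m v) := by
  rw [integral_prod _ hyF_int, integral_prod _ hF'_int, ← integral_const_mul]
  apply integral_congr_ae
  filter_upwards [hF_int.prod_right_ae, hF'_int.prod_right_ae, hyF_int.prod_right_ae]
    with x hx hx' hyx
  exact integral_sub_mean_mul_gaussianReal (hF x) hx hx' hyx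

end Stein

section Rotation

variable {E : Type*} [NormedAddCommGroup E] [NormedSpace ℝ E]

lemma norm_rotation_apply_le (θ : ℝ) (z : E × E) : ‖Rot θ z‖ ≤ 2 * ‖z‖ := by
  have h_comb {a b : ℝ} (ha : |a| ≤ 1) (hb : |b| ≤ 1) : ‖a • z.1 + b • z.2‖ ≤ 2 * ‖z‖ :=
    calc ‖a • z.1 + b • z.2‖ ≤ |a| * ‖z.1‖ + |b| * ‖z.2‖ := by
          simpa only [norm_smul, Real.norm_eq_abs] using norm_add_le (a • z.1) (b • z.2)
      _ ≤ 1 * ‖z‖ + 1 * ‖z‖ := by gcongr; exacts [norm_fst_le z, norm_snd_le z]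
      _ = 2 * ‖z‖ := by ring
  have h_sin : |-Real.sin θ| ≤ 1 := (abs_neg _).trans_le (Real.abs_sin_le_one θ)
  exact norm_prod_le_iff.2 ⟨h_comb (Real.abs_cos_le_one θ) (Real.abs_sin_le_one θ),
    h_comb h_sin (Real.abs_cos_le_one θ)⟩

lemma rotation_neg_rotation_apply (θ : ℝ) (z : E × E) : Rot (-θ) (Rot θ z) = z := by
  simp only [ContinuousLinearMap.rotation_apply, Real.cos_neg, Real.sin_neg, neg_neg]
  refine Prod.ext ?_ ?_
  · linear_combination (norm := module) Real.cos_sq_add_sin_sq θ • z.1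
  · linear_combination (norm := module) Real.cos_sq_add_sin_sq θ • z.2

lemma hasDerivAt_fst_rotation_apply (θ : ℝ) (z : E × E) :
    HasDerivAt (fun θ ↦ (Rot θ z).1) (Rot θ z).2 θ :=
  ((Real.hasDerivAt_cos θ).smul_const z.1).add ((Real.hasDerivAt_sin θ).smul_const z.2)

lemma integral_comp_rotation [SecondCountableTopology E] [CompleteSpace E] [MeasurableSpace E]
    [BorelSpace E] {G : Type*} [NormedAddCommGroup G] [NormedSpace ℝ G] {μ : Measure E}
    [IsGaussian μ] (hμ : μ[id] = 0) (θ : ℝ) {F : E × E → G}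
    (hF : AEStronglyMeasurable F (μ.prod μ)) :
    ∫ z, F (Rot θ z) ∂μ.prod μ = ∫ z, F z ∂μ.prod μ := by
  have h_map := IsGaussian.map_rotation_eq_self hμ θ
  rw [← integral_map (by fun_prop) (by rwa [h_map]), h_map]

end Rotation

section PolynomialGrowth

variable {f g : ℝ → ℝ}

lemma integrable_of_isBigO_one_add_norm_pow {E F : Type*} [NormedAddCommGroup E] [NormedSpace ℝ E]
    [SecondCountableTopology E] [CompleteSpace E] [MeasurableSpace E] [BorelSpace E]
    [NormedAddCommGroup F] {μ : Measure E} [IsGaussian μ] {f : E → F} {n : ℕ}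
    (hf_meas : AEStronglyMeasurable f μ) (hf : f =O[⊤] fun z ↦ (1 + ‖z‖) ^ n) :
    Integrable f μ := by
  have h_memLp : MemLp (fun z : E ↦ 1 + ‖z‖) n μ :=
    (memLp_const (1 : ℝ)).add (IsGaussian.memLp_id μ n (ENNReal.natCast_ne_top n)).norm
  obtain ⟨C, hC⟩ := isBigO_top.1 hf
  refine (h_memLp.integrable_norm_pow'.const_mul C).mono' hf_meas (ae_of_all _ fun z ↦ ?_)
  simpa only [norm_pow] using hC z

lemma PolyGrowth.exists_isBigO_comp (hf : PolyGrowth f) {ι : Type*} {l : Filter ι} {u r : ι → ℝ}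
    (hu : (fun i ↦ 1 + |u i|) =O[l] r) : ∃ n : ℕ, (fun i ↦ f (u i)) =O[l] fun i ↦ r i ^ n := by
  obtain ⟨C, -, n, hC⟩ := hf
  refine ⟨n, (IsBigO.of_bound C (Eventually.of_forall fun i ↦ ?_)).trans (hu.pow n)⟩
  exact (hC (u i)).trans_eq (by rw [Real.norm_of_nonneg (by positivity)])

lemma PolyGrowth.exists_isBigO_comp_fst_rotation (hf : PolyGrowth f) :
    ∃ n : ℕ, (fun p : ℝ × ℝ × ℝ ↦ f (Rot p.1 p.2).1) =O[⊤] fun p ↦ (1 + ‖p.2‖) ^ n := by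
  refine hf.exists_isBigO_comp (isBigO_top.2 ⟨2, fun p ↦ ?_⟩)
  have h_fst : |(Rot p.1 p.2).1| ≤ 2 * ‖p.2‖ :=
    (norm_fst_le _).trans (norm_rotation_apply_le p.1 p.2)
  rw [Real.norm_of_nonneg (by positivity), Real.norm_of_nonneg (by positivity)]
  linarith

lemma PolyGrowth.exists_isBigO_mul_comp_rotation (hf : PolyGrowth f) (hg : PolyGrowth g) :
    ∃ n : ℕ, (fun p : ℝ × ℝ × ℝ ↦ f p.2.1 * g (Rot p.1 p.2).1) =O[⊤]
      fun p ↦ (1 + ‖p.2‖) ^ n := by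
  obtain ⟨j, hj⟩ := hf.exists_isBigO_comp_fst_rotation
  obtain ⟨k, hk⟩ := hg.exists_isBigO_comp_fst_rotation
  have hj_zero : (fun p : ℝ × ℝ × ℝ ↦ f p.2.1) =O[⊤] fun p ↦ (1 + ‖p.2‖) ^ j := by
    simpa only [Function.comp_def, ContinuousLinearMap.rotation_apply, Real.cos_zero, Real.sin_zero,
      one_smul, zero_smul, add_zero] using
      hj.comp_tendsto (k := fun p : ℝ × ℝ × ℝ ↦ ((0 : ℝ), p.2)) tendsto_top
  exact ⟨j + k, by simpa only [pow_add] using hj_zero.mul hk⟩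

variable {μ : Measure (ℝ × ℝ)} [IsGaussian μ]

lemma PolyGrowth.integrable_mul_comp_rotation (hf : PolyGrowth f) (hg : PolyGrowth g)
    (hf_meas : Measurable f) (hg_meas : Measurable g) (θ : ℝ) :
    Integrable (fun z ↦ f z.1 * g (Rot θ z).1) μ := by
  obtain ⟨n, hn⟩ := hf.exists_isBigO_mul_comp_rotation hg
  exact integrable_of_isBigO_one_add_norm_pow (by fun_prop)
    (hn.comp_tendsto (k := fun z ↦ (θ, z)) tendsto_top)

lemma PolyGrowth.integrable_snd_mul_mul_comp_rotation (hf : PolyGrowth f) (hg : PolyGrowth g)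
    (hf_meas : Measurable f) (hg_meas : Measurable g) (θ : ℝ) :
    Integrable (fun z ↦ z.2 * (f z.1 * g (Rot θ z).1)) μ := by
  obtain ⟨n, hn⟩ := hf.exists_isBigO_mul_comp_rotation hg
  have h_snd : (fun z : ℝ × ℝ ↦ z.2) =O[⊤] fun z ↦ 1 + ‖z‖ :=
    isBigO_top.2 ⟨1, fun z ↦ by
      rw [one_mul, Real.norm_of_nonneg (by positivity : 0 ≤ 1 + ‖z‖)]
      linarith [norm_snd_le z]⟩
  refine integrable_of_isBigO_one_add_norm_pow (n := n + 1) (by fun_prop) ?_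
  simpa only [pow_succ', Function.comp_def] using
    h_snd.mul (hn.comp_tendsto (k := fun z ↦ (θ, z)) tendsto_top)

theorem hasDerivAt_integral_mul_comp_rotation (hf : PolyGrowth f) (hf_meas : Measurable f)
    (hg : PolyGrowth g) (hg_diff : Differentiable ℝ g) (hg' : PolyGrowth (deriv g)) (θ : ℝ) :
    HasDerivAt (fun θ ↦ ∫ z, f z.1 * g (Rot θ z).1 ∂μ)
      (∫ z, (Rot θ z).2 * (f z.1 * deriv g (Rot θ z).1) ∂μ) θ := by
  have hg_meas : Measurable g := hg_diff.continuous.measurable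
  obtain ⟨n, hn⟩ := hf.exists_isBigO_mul_comp_rotation hg'
  obtain ⟨C, hC⟩ := isBigO_top.1 hn
  have h_pow_int : Integrable (fun z : ℝ × ℝ ↦ (1 + ‖z‖) ^ (n + 1)) μ :=
    integrable_of_isBigO_one_add_norm_pow (by fun_prop) (isBigO_refl _ _)
  have h_bound (z : ℝ × ℝ) (t : ℝ) :
      ‖(Rot t z).2 * (f z.1 * deriv g (Rot t z).1)‖ ≤ 2 * C * (1 + ‖z‖) ^ (n + 1) := by
    have h_snd : ‖(Rot t z).2‖ ≤ 2 * (1 + ‖z‖) := by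
      linarith [norm_snd_le (Rot t z), norm_rotation_apply_le t z]
    have h_mul : ‖f z.1 * deriv g (Rot t z).1‖ ≤ C * (1 + ‖z‖) ^ n :=
      (hC (t, z)).trans_eq (by rw [Real.norm_of_nonneg (by positivity)])
    calc ‖(Rot t z).2 * (f z.1 * deriv g (Rot t z).1)‖
        ≤ 2 * (1 + ‖z‖) * (C * (1 + ‖z‖) ^ n) := norm_mul_le_of_le h_snd h_mul
      _ = 2 * C * (1 + ‖z‖) ^ (n + 1) := by ring
  have h_deriv (z : ℝ × ℝ) (t : ℝ) : HasDerivAt (fun t ↦ f z.1 * g (Rot t z).1)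
      ((Rot t z).2 * (f z.1 * deriv g (Rot t z).1)) t :=
    (((hg_diff _).hasDerivAt.comp t (hasDerivAt_fst_rotation_apply t z)).const_mul
      (f z.1)).congr_deriv (by ring)
  exact (hasDerivAt_integral_of_dominated_loc_of_deriv_le univ_mem
    (Eventually.of_forall fun t ↦ by fun_prop)
    (hf.integrable_mul_comp_rotation hg hf_meas hg_meas θ) (by fun_prop)
    (ae_of_all _ fun z t _ ↦ h_bound z t) (h_pow_int.const_mul _)
    (ae_of_all _ fun z t _ ↦ h_deriv z t)).2

end PolynomialGrowth

section Correlation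

variable {f g : ℝ → ℝ} {v : ℝ≥0}

lemma integral_comp_rotation_gaussianReal (θ : ℝ) {F : ℝ × ℝ → ℝ} (hF : Measurable F) :
    ∫ z, F (Rot θ z) ∂(gaussianReal 0 v).prod (gaussianReal 0 v) =
      ∫ z, F z ∂(gaussianReal 0 v).prod (gaussianReal 0 v) :=
  integral_comp_rotation integral_id_gaussianReal θ hF.aestronglyMeasurable

lemma hasDerivAt_fst_rotation_mk (θ x y : ℝ) :
    HasDerivAt (fun t ↦ (Rot θ (x, t)).1) (Real.sin θ) y :=
  (((hasDerivAt_id' y).const_mul (Real.sin θ)).const_add (Real.cos θ * x)).congr_deriv (mul_one _)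

theorem integral_snd_rotation_mul_mul_comp_rotation (hf : PolyGrowth f)
    (hf_diff : Differentiable ℝ f) (hf' : PolyGrowth (deriv f)) (hg : PolyGrowth g)
    (hg_meas : Measurable g) (θ : ℝ) :
    ∫ z, (Rot θ z).2 * (f z.1 * g (Rot θ z).1) ∂(gaussianReal 0 v).prod (gaussianReal 0 v) =
      -Real.sin θ * (v * ∫ z, deriv f z.1 * g (Rot θ z).1
        ∂(gaussianReal 0 v).prod (gaussianReal 0 v)) := by
  set P := (gaussianReal 0 v).prod (gaussianReal 0 v)
  have hf_meas : Measurable f := hf_diff.continuous.measurable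
  have hf'_meas : Measurable (deriv f) := measurable_deriv f
  have h_deriv (x y : ℝ) : HasDerivAt (fun t ↦ g x * f (Rot (-θ) (x, t)).1)
      (-Real.sin θ * (g x * deriv f (Rot (-θ) (x, y)).1)) y :=
    (((hf_diff _).hasDerivAt.comp y (hasDerivAt_fst_rotation_mk (-θ) x y)).const_mul
      (g x)).congr_deriv (by rw [Real.sin_neg]; ring)
  have h_stein := integral_snd_sub_mean_mul_prod_gaussianReal h_deriv
    (hg.integrable_mul_comp_rotation (μ := P) hf hg_meas hf_meas (-θ))
    ((hg.integrable_mul_comp_rotation hf' hg_meas hf'_meas (-θ)).const_mul _)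
    (by simpa only [sub_zero] using
      hg.integrable_snd_mul_mul_comp_rotation hf hg_meas hf_meas (-θ))
  calc ∫ z, (Rot θ z).2 * (f z.1 * g (Rot θ z).1) ∂P
      = ∫ z, z.2 * (g z.1 * f (Rot (-θ) z).1) ∂P := by
        simpa only [rotation_neg_rotation_apply, mul_comm (g _)] using
          integral_comp_rotation_gaussianReal θ
            (F := fun z ↦ z.2 * (g z.1 * f (Rot (-θ) z).1)) (by fun_prop)
    _ = v * ∫ z, -Real.sin θ * (g z.1 * deriv f (Rot (-θ) z).1) ∂P := by
        simpa only [sub_zero] using h_stein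
    _ = -Real.sin θ * (v * ∫ z, g z.1 * deriv f (Rot (-θ) z).1 ∂P) := by
        rw [integral_const_mul]; ring
    _ = -Real.sin θ * (v * ∫ z, deriv f z.1 * g (Rot θ z).1 ∂P) := by
        congr 2
        simpa only [rotation_neg_rotation_apply, mul_comm (g _)] using
          (integral_comp_rotation_gaussianReal θ
            (F := fun z ↦ g z.1 * deriv f (Rot (-θ) z).1) (by fun_prop)).symm

theorem hasDerivAt_integral_mul_comp_rotation_gaussianReal (hf : PolyGrowth f)
    (hf_diff : Differentiable ℝ f) (hf' : PolyGrowth (deriv f)) (hg : PolyGrowth g)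
    (hg_diff : Differentiable ℝ g) (hg' : PolyGrowth (deriv g)) (θ : ℝ) :
    HasDerivAt
      (fun θ ↦ ∫ z, f z.1 * g (Rot θ z).1 ∂(gaussianReal 0 v).prod (gaussianReal 0 v))
      (-Real.sin θ * (v * ∫ z, deriv f z.1 * deriv g (Rot θ z).1
        ∂(gaussianReal 0 v).prod (gaussianReal 0 v))) θ := by
  rw [← integral_snd_rotation_mul_mul_comp_rotation hf hf_diff hf' hg' (measurable_deriv g)]
  exact hasDerivAt_integral_mul_comp_rotation hf hf_diff.continuous.measurable hg hg_diff hg' θ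

lemma integral_mul_comp_rotation_arccos (hf : PolyGrowth f) (hf_meas : Measurable f)
    (hg : PolyGrowth g) (hg_meas : Measurable g) {ρ : ℝ} (hρ : ρ ∈ Set.Icc (-1) 1) :
    ∫ z, f z.1 * g (Rot (Real.arccos ρ) z).1 ∂(gaussianReal 0 v).prod (gaussianReal 0 v) =
      ∫ x, ∫ y, f x * g (ρ * x + Real.sqrt (1 - ρ ^ 2) * y)
        ∂gaussianReal 0 v ∂gaussianReal 0 v := by
  rw [integral_prod _ (hf.integrable_mul_comp_rotation hg hf_meas hg_meas _)]
  simp only [ContinuousLinearMap.rotation_apply, Real.cos_arccos hρ.1 hρ.2, Real.sin_arccos,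
    smul_eq_mul]

end Correlation

theorem phiCorr_hasDerivAt_general {f g : ℝ → ℝ} (v : ℝ≥0) (hf : PolyGrowth f)
    (hf_diff : Differentiable ℝ f) (hf' : PolyGrowth (deriv f)) (hg : PolyGrowth g)
    (hg_diff : Differentiable ℝ g) (hg' : PolyGrowth (deriv g)) {ρ : ℝ}
    (hρ : ρ ∈ Set.Ioo (-1 : ℝ) 1) :
    HasDerivAt
      (fun ρ ↦ ∫ x, ∫ y, f x * g (ρ * x + Real.sqrt (1 - ρ ^ 2) * y)
        ∂gaussianReal 0 v ∂gaussianReal 0 v)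
      (v * ∫ x, ∫ y, deriv f x * deriv g (ρ * x + Real.sqrt (1 - ρ ^ 2) * y)
        ∂gaussianReal 0 v ∂gaussianReal 0 v) ρ := by
  have h_sqrt : Real.sqrt (1 - ρ ^ 2) ≠ 0 := (Real.sqrt_pos.2 (by nlinarith [hρ.1, hρ.2])).ne'
  have h_chain := (hasDerivAt_integral_mul_comp_rotation_gaussianReal (v := v) hf hf_diff hf' hg
    hg_diff hg' (Real.arccos ρ)).comp ρ (Real.hasDerivAt_arccos hρ.1.ne' hρ.2.ne)
  refine (h_chain.congr_of_eventuallyEq ?_).congr_deriv ?_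
  · filter_upwards [Ioo_mem_nhds hρ.1 hρ.2] with r hr
    exact (integral_mul_comp_rotation_arccos hf hf_diff.continuous.measurable hg
      hg_diff.continuous.measurable (Set.Ioo_subset_Icc_self hr)).symm
  · rw [integral_mul_comp_rotation_arccos hf' (measurable_deriv f) hg' (measurable_deriv g)
      (Set.Ioo_subset_Icc_self hρ), Real.sin_arccos]
    field_simp

theorem phiCorr_hasDerivAt (g : ℝ → ℝ) (hg : ContDiff ℝ 2 g)
    (h0 : PolyGrowth g) (h1 : PolyGrowth (deriv g)) (h2 : PolyGrowth (deriv (deriv g))) :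
    ∀ ρ ∈ Set.Ioo (-1 : ℝ) 1,
      HasDerivAt (phiCorr g)
        (∫ x, ∫ y, deriv g x * deriv g (ρ * x + Real.sqrt (1 - ρ ^ 2) * y)
          ∂(gaussianReal 0 1) ∂(gaussianReal 0 1)) ρ := by
  intro ρ hρ
  have hg_diff : Differentiable ℝ g := hg.differentiable two_ne_zero
  exact (phiCorr_hasDerivAt_general 1 h0 hg_diff h1 h0 hg_diff h1 hρ).congr_deriv
    (by rw [NNReal.coe_one, one_mul])
end

section
/- Let g : ℝ → ℝ be twice continuously differentiable and nondecreasing (equivalently, g'(x) ≥ 0 for all x), such that g, g' and g'' have at most polynomial growth. Then φ_g is nondecreasing on [−1,1]; in particular φ_g(−1) ≤ φ_g(ρ) for every ρ ∈ [−1,1], i.e. φ_g attains its minimum over [−1,1] at ρ = −1. -/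
open MeasureTheory ProbabilityTheory

/-!
For a standard Gaussian vector `X` in the plane, `φ_g(ρ) = E[g⟪u, X⟫ g⟪v, X⟫]` whenever `u`, `v` are
unit vectors with `⟪u, v⟫ = ρ`. Given another unit vector `w` with `⟪u, w⟫ ≤ ⟪u, v⟫`, let `σ` be the
reflection exchanging `v` and `w`. As the law of `X` is `σ`-invariant,
`2 (E[g⟪u, X⟫ g⟪v, X⟫] - E[g⟪u, X⟫ g⟪w, X⟫])
  = E[(g⟪u, X⟫ - g⟪u, σ X⟫) (g⟪v, X⟫ - g⟪w, X⟫)]`,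
and the two factors have the same sign, because `⟪u, X⟫ - ⟪u, σ X⟫` is a nonnegative multiple of
`⟪v - w, X⟫`. This two-point symmetrization needs no derivative of `g`.
-/

open scoped RealInnerProductSpace ENNReal

theorem integral_mul_comp_le_integral_mul {α : Type*} [MeasurableSpace α] {μ : Measure α}
    {σ : α → α} (hσ : MeasurePreserving σ μ μ) (hinv : Function.Involutive σ) {F G : α → ℝ}
    (hFG : Integrable (fun x ↦ F x * G x) μ) (hFGσ : Integrable (fun x ↦ F x * G (σ x)) μ)
    (hsign : ∀ x, 0 ≤ (F x - F (σ x)) * (G x - G (σ x))) :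
    ∫ x, F x * G (σ x) ∂μ ≤ ∫ x, F x * G x ∂μ := by
  have hemb : MeasurableEmbedding σ :=
    (MeasurableEquiv.ofInvolutive σ hinv hσ.measurable).measurableEmbedding
  have hD : Integrable (fun x ↦ F x * G x - F x * G (σ x)) μ := hFG.sub hFGσ
  have hDσ : Integrable (fun x ↦ F (σ x) * G (σ x) - F (σ x) * G x) μ := by
    simpa only [Function.comp_def, hinv _] using hσ.integrable_comp_of_integrable hD
  have hDσ_eq : ∫ x, (F (σ x) * G (σ x) - F (σ x) * G x) ∂μ =
      ∫ x, (F x * G x - F x * G (σ x)) ∂μ := by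
    simpa only [hinv _] using hσ.integral_comp hemb (fun x ↦ F x * G x - F x * G (σ x))
  have hsum : 0 ≤ 2 * ∫ x, (F x * G x - F x * G (σ x)) ∂μ := calc
    0 ≤ ∫ x, (F x - F (σ x)) * (G x - G (σ x)) ∂μ := integral_nonneg hsign
    _ = ∫ x, ((F x * G x - F x * G (σ x)) + (F (σ x) * G (σ x) - F (σ x) * G x)) ∂μ := by
      congr 1 with x
      ring
    _ = 2 * ∫ x, (F x * G x - F x * G (σ x)) ∂μ := by
      rw [integral_add hD hDσ, hDσ_eq, two_mul]
  rw [integral_sub hFG hFGσ] at hsum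
  linarith

section Reflection

variable {E : Type*} [NormedAddCommGroup E] [InnerProductSpace ℝ E]

theorem inner_sub_inner_reflection (d u x : E) :
    ⟪u, x⟫ - ⟪u, (ℝ ∙ d)ᗮ.reflection x⟫ = 2 * (⟪u, d⟫ / ‖d‖ ^ 2) * ⟪d, x⟫ := by
  rw [Submodule.reflection_orthogonal_apply, Submodule.reflection_singleton_apply, inner_neg_right,
    inner_sub_right, inner_smul_right_eq_smul, inner_smul_right]
  simp only [RCLike.ofReal_real_eq_id, id, nsmul_eq_mul, Nat.cast_ofNat]
  ring

theorem inner_reflection_sub {v w : E} (h : ‖v‖ = ‖w‖) (x : E) :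
    ⟪v, (ℝ ∙ (v - w))ᗮ.reflection x⟫ = ⟪w, x⟫ := by
  rw [← Submodule.reflection_sub h, LinearIsometryEquiv.inner_map_eq_flip,
    Submodule.reflection_symm, Submodule.reflection_sub h]

theorem integral_mul_inner_le_of_inner_le [MeasurableSpace E] {μ : Measure E} {u v w : E}
    (hμ : MeasurePreserving (ℝ ∙ (v - w))ᗮ.reflection μ μ) (hvw : ‖v‖ = ‖w‖)
    (huvw : ⟪u, w⟫ ≤ ⟪u, v⟫) {f g : ℝ → ℝ} (hf : Monotone f) (hg : Monotone g)
    (hv : Integrable (fun x ↦ f ⟪u, x⟫ * g ⟪v, x⟫) μ)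
    (hw : Integrable (fun x ↦ f ⟪u, x⟫ * g ⟪w, x⟫) μ) :
    ∫ x, f ⟪u, x⟫ * g ⟪w, x⟫ ∂μ ≤ ∫ x, f ⟪u, x⟫ * g ⟪v, x⟫ ∂μ := by
  set σ := (ℝ ∙ (v - w))ᗮ.reflection
  have hvσ (x : E) : ⟪v, σ x⟫ = ⟪w, x⟫ := inner_reflection_sub hvw x
  have hcoef : 0 ≤ 2 * (⟪u, v - w⟫ / ‖v - w‖ ^ 2) := by
    rw [inner_sub_right]
    have := sub_nonneg.2 huvw
    positivity
  have huσ (x : E) : ⟪u, x⟫ - ⟪u, σ x⟫ =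
      2 * (⟪u, v - w⟫ / ‖v - w‖ ^ 2) * (⟪v, x⟫ - ⟪w, x⟫) := by
    rw [inner_sub_inner_reflection, inner_sub_left]
  have hsign (x : E) :
      0 ≤ (f ⟪u, x⟫ - f ⟪u, σ x⟫) * (g ⟪v, x⟫ - g ⟪v, σ x⟫) := by
    rw [hvσ]
    rcases le_total ⟪w, x⟫ ⟪v, x⟫ with hle | hle
    · have hu : ⟪u, σ x⟫ ≤ ⟪u, x⟫ :=
        sub_nonneg.1 (huσ x ▸ mul_nonneg hcoef (sub_nonneg.2 hle))
      exact mul_nonneg (sub_nonneg.2 (hf hu)) (sub_nonneg.2 (hg hle))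
    · have hu : ⟪u, x⟫ ≤ ⟪u, σ x⟫ :=
        sub_nonpos.1 (huσ x ▸ mul_nonpos_of_nonneg_of_nonpos hcoef (sub_nonpos.2 hle))
      exact mul_nonneg_of_nonpos_of_nonpos (sub_nonpos.2 (hf hu)) (sub_nonpos.2 (hg hle))
  simpa only [hvσ] using integral_mul_comp_le_integral_mul hμ
    (Submodule.reflection_involutive _) hv (by simpa only [hvσ] using hw) hsign

end Reflection

section StdGaussian

variable {E : Type*} [NormedAddCommGroup E] [InnerProductSpace ℝ E] [FiniteDimensional ℝ E]
  [MeasurableSpace E] [BorelSpace E]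

theorem measurePreserving_stdGaussian (σ : E ≃ₗᵢ[ℝ] E) :
    MeasurePreserving σ (stdGaussian E) (stdGaussian E) :=
  ⟨by fun_prop, stdGaussian_map σ⟩

theorem measurePreserving_inner_stdGaussian (u : E) :
    MeasurePreserving (fun x ↦ ⟪u, x⟫) (stdGaussian E) (gaussianReal 0 (‖u‖₊ ^ 2)) := by
  refine ⟨by fun_prop, ?_⟩
  have h := IsGaussian.map_eq_gaussianReal (μ := stdGaussian E) (innerSL ℝ u)
  rw [integral_strongDual_stdGaussian, variance_dual_stdGaussian, innerSL_apply_norm] at h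
  rwa [Real.toNNReal_pow (norm_nonneg u), norm_toNNReal] at h

theorem integrable_mul_inner_stdGaussian {u v : E} {f g : ℝ → ℝ} {p q : ℝ≥0∞}
    [p.HolderConjugate q] (hf : MemLp f p (gaussianReal 0 (‖u‖₊ ^ 2)))
    (hg : MemLp g q (gaussianReal 0 (‖v‖₊ ^ 2))) :
    Integrable (fun x ↦ f ⟪u, x⟫ * g ⟪v, x⟫) (stdGaussian E) :=
  (hf.comp_measurePreserving (measurePreserving_inner_stdGaussian u)).integrable_mul
    (hg.comp_measurePreserving (measurePreserving_inner_stdGaussian v))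

end StdGaussian

theorem integral_stdGaussian_fin_two {F : Type*} [NormedAddCommGroup F] [NormedSpace ℝ F]
    {f : EuclideanSpace ℝ (Fin 2) → F} (hf : Integrable f (stdGaussian _)) :
    ∫ x, f x ∂stdGaussian (EuclideanSpace ℝ (Fin 2)) =
      ∫ x, ∫ y, f !₂[x, y] ∂gaussianReal 0 1 ∂gaussianReal 0 1 := by
  let e : ℝ × ℝ ≃ᵐ EuclideanSpace ℝ (Fin 2) :=
    MeasurableEquiv.finTwoArrow.symm.trans (MeasurableEquiv.toLp 2 _)
  have he : MeasurePreserving e ((gaussianReal 0 1).prod (gaussianReal 0 1)) (stdGaussian _) :=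
    (measurePreserving_finTwoArrow _).symm.trans ⟨by fun_prop, map_pi_eq_stdGaussian⟩
  rw [← he.integral_comp']
  exact integral_prod _ (he.integrable_comp_of_integrable hf)

/-- The point of abscissa `ρ` on the upper unit half-circle, for `ρ ∈ [-1, 1]`. Its inner product
with a standard Gaussian vector `(x, y)` is the second argument of `g` in `phiCorr`. -/
noncomputable def halfCirclePoint (ρ : ℝ) : EuclideanSpace ℝ (Fin 2) :=
  !₂[ρ, √(1 - ρ ^ 2)]

theorem norm_halfCirclePoint {ρ : ℝ} (hρ : ρ ∈ Set.Icc (-1 : ℝ) 1) : ‖halfCirclePoint ρ‖ = 1 := by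
  have : 0 ≤ 1 - ρ ^ 2 := by nlinarith [hρ.1, hρ.2]
  simp [halfCirclePoint, EuclideanSpace.norm_eq, Real.sq_sqrt this]

theorem inner_halfCirclePoint (ρ : ℝ) (x : EuclideanSpace ℝ (Fin 2)) :
    ⟪halfCirclePoint ρ, x⟫ = ρ * x 0 + √(1 - ρ ^ 2) * x 1 := by
  simp [halfCirclePoint, PiLp.inner_apply, mul_comm]

theorem inner_halfCirclePoint_one_left (ρ : ℝ) : ⟪halfCirclePoint 1, halfCirclePoint ρ⟫ = ρ := by
  rw [inner_halfCirclePoint]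
  simp [halfCirclePoint]

theorem integrable_mul_halfCirclePoint {g : ℝ → ℝ} (hg : MemLp g 2 (gaussianReal 0 1)) {ρ : ℝ}
    (hρ : ρ ∈ Set.Icc (-1 : ℝ) 1) :
    Integrable (fun x ↦ g ⟪halfCirclePoint 1, x⟫ * g ⟪halfCirclePoint ρ, x⟫) (stdGaussian _) := by
  have hmem {t : ℝ} (ht : t ∈ Set.Icc (-1 : ℝ) 1) :
      MemLp g 2 (gaussianReal 0 (‖halfCirclePoint t‖₊ ^ 2)) := by
    rwa [show ‖halfCirclePoint t‖₊ = 1 from NNReal.eq (norm_halfCirclePoint ht), one_pow]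
  exact integrable_mul_inner_stdGaussian (hmem (by norm_num)) (hmem hρ)

theorem phiCorr_eq_integral_stdGaussian {g : ℝ → ℝ} (hg : MemLp g 2 (gaussianReal 0 1)) {ρ : ℝ}
    (hρ : ρ ∈ Set.Icc (-1 : ℝ) 1) :
    phiCorr g ρ =
      ∫ x, g ⟪halfCirclePoint 1, x⟫ * g ⟪halfCirclePoint ρ, x⟫ ∂stdGaussian _ := by
  rw [integral_stdGaussian_fin_two (integrable_mul_halfCirclePoint hg hρ)]
  simp [phiCorr, inner_halfCirclePoint]

theorem memLp_norm_pow {α E : Type*} [MeasurableSpace α] [NormedAddCommGroup E] {μ : Measure α}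
    {f : α → E} {p : ℝ≥0∞} {n : ℕ} (hn : n ≠ 0) (hf : MemLp f (p * n) μ) :
    MemLp (fun x ↦ ‖f x‖ ^ n) p μ := by
  have h := hf.norm_rpow_div n
  rw [ENNReal.mul_div_cancel_right (Nat.cast_ne_zero.2 hn) (ENNReal.natCast_ne_top n)] at h
  simpa only [ENNReal.toReal_natCast, Real.rpow_natCast] using h

theorem PolyGrowth.memLp {h : ℝ → ℝ} (hh : PolyGrowth h) {μ : Measure ℝ} [IsGaussian μ]
    (hmeas : AEStronglyMeasurable h μ) {p : ℝ≥0∞} (hp : p ≠ ∞) : MemLp h p μ := by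
  obtain ⟨C, hC, m, hbound⟩ := hh
  have hmem : MemLp (fun x : ℝ ↦ 1 + |x|) (p * (m + 1 : ℕ)) μ :=
    (memLp_const (1 : ℝ)).add (IsGaussian.memLp_id μ _ (ENNReal.mul_ne_top hp (by simp))).norm
  have hpow := (memLp_norm_pow m.succ_ne_zero hmem).const_mul C
  refine hpow.mono' hmeas (.of_forall fun x ↦ (hbound x).trans ?_)
  have hone : 1 ≤ 1 + |x| := le_add_of_nonneg_right (abs_nonneg x)
  rw [Real.norm_of_nonneg (zero_le_one.trans hone)]
  gcongr
  exact m.le_succ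

theorem phiCorr_monotoneOn_general {g : ℝ → ℝ} (hmono : Monotone g)
    (hg : MemLp g 2 (gaussianReal 0 1)) : MonotoneOn (phiCorr g) (Set.Icc (-1 : ℝ) 1) := by
  intro a ha b hb hab
  rw [phiCorr_eq_integral_stdGaussian hg ha, phiCorr_eq_integral_stdGaussian hg hb]
  refine integral_mul_inner_le_of_inner_le (measurePreserving_stdGaussian _) ?_ ?_ hmono hmono
    (integrable_mul_halfCirclePoint hg hb) (integrable_mul_halfCirclePoint hg ha)
  · rw [norm_halfCirclePoint ha, norm_halfCirclePoint hb]
  · simpa only [inner_halfCirclePoint_one_left] using hab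

theorem phiCorr_monotoneOn (g : ℝ → ℝ) (hg : ContDiff ℝ 2 g) (hmono : ∀ x, 0 ≤ deriv g x)
    (h0 : PolyGrowth g) (h1 : PolyGrowth (deriv g)) (h2 : PolyGrowth (deriv (deriv g))) :
    MonotoneOn (phiCorr g) (Set.Icc (-1 : ℝ) 1) ∧
    ∀ ρ ∈ Set.Icc (-1 : ℝ) 1, phiCorr g (-1) ≤ phiCorr g ρ := by
  have hM : MonotoneOn (phiCorr g) (Set.Icc (-1 : ℝ) 1) :=
    phiCorr_monotoneOn_general (monotone_of_deriv_nonneg (hg.differentiable (by norm_num)) hmono)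
      (h0.memLp hg.continuous.aestronglyMeasurable (by simp))
  exact ⟨hM, fun ρ hρ ↦ hM (by norm_num) hρ hρ.1⟩
end

section
/- (Antithetic variance reduction.) Let g : ℝ → ℝ be twice continuously differentiable and nondecreasing, such that g, g' and g'' have at most polynomial growth, and let Z be a standard Gaussian random variable on a probability space. Then Var((g(Z) + g(−Z))/2) ≤ (1/2) Var(g(Z)). -/
open MeasureTheory ProbabilityTheory

/-!
If `Z` and `Z'` have the same law and move in opposite directions, then so do `g ∘ Z` and `g ∘ Z'`
for monotone `g`. Write `X` and `Y` for these two variables: averaging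
`(X ω' - X ω) * (Y ω' - Y ω) ≤ 0` over independent `ω` and `ω'` shows that twice their covariance
is nonpositive. Since `X` and `Y` have equal variances, the variance of their mean is at most half
of the common value. A centred Gaussian is symmetric, so `Z' = -Z` is admissible; polynomial growth
makes `g ∘ Z` square integrable.
-/

section

open scoped ENNReal

variable {Ω : Type*} [MeasurableSpace Ω] {P : Measure Ω}

lemma memLp_pow_of_memLp_mul {R : Type*} [NormedRing R] [IsFiniteMeasure P] {f : Ω → R} {m : ℕ}
    {p : ℝ≥0∞} (hf : MemLp f (m * p) P) : MemLp (fun ω => f ω ^ m) p P := by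
  rcases Nat.eq_zero_or_pos m with rfl | hm
  · simpa only [pow_zero] using memLp_const (1 : R)
  · have hexp : (m : ℝ≥0∞) * p / m = p := by
      rw [mul_comm]
      exact ENNReal.mul_div_cancel_right (Nat.cast_ne_zero.mpr hm.ne') (ENNReal.natCast_ne_top m)
    have hnorm : MemLp (fun ω => ‖f ω‖ ^ m) p P := by
      simpa [hexp] using hf.norm_rpow_div (m : ℝ≥0∞)
    exact hnorm.mono' (hf.aestronglyMeasurable.pow m)
      (Filter.Eventually.of_forall fun ω => norm_pow_le' (f ω) hm)

lemma PolyGrowth.memLp_comp [IsFiniteMeasure P] {h : ℝ → ℝ} (hh : PolyGrowth h) {Z : Ω → ℝ}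
    (hZ : ∀ q : ℝ≥0∞, q ≠ ∞ → MemLp Z q P)
    (hmeas : AEStronglyMeasurable (fun ω => h (Z ω)) P) {p : ℝ≥0∞} (hp : p ≠ ∞) :
    MemLp (fun ω => h (Z ω)) p P := by
  obtain ⟨C, -, m, hbound⟩ := hh
  have hbase : MemLp (fun ω => 1 + |Z ω|) (m * p) P :=
    (memLp_const (1 : ℝ)).add (hZ _ (ENNReal.mul_ne_top (ENNReal.natCast_ne_top m) hp)).abs
  have hdominating : MemLp (fun ω => C * (1 + |Z ω|) ^ m) p P :=
    (memLp_pow_of_memLp_mul hbase).const_mul C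
  exact hdominating.mono' hmeas (Filter.Eventually.of_forall fun ω => hbound (Z ω))

lemma identDistrib_neg_of_hasLaw_gaussianReal {Z : Ω → ℝ} {v : NNReal}
    (hZ : HasLaw Z (gaussianReal 0 v) P) : IdentDistrib Z (-Z) P P :=
  hZ.identDistrib (by simpa only [neg_zero] using gaussianReal_neg hZ)

lemma variance_add_div_two_le_of_covariance_nonpos [IsFiniteMeasure P] {X Y : Ω → ℝ}
    (hX : MemLp X 2 P) (hY : MemLp Y 2 P) (hcov : cov[X, Y; P] ≤ 0) :
    Var[fun ω => (X ω + Y ω) / 2; P] ≤ (Var[X; P] + Var[Y; P]) / 4 := by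
  simp_rw [div_eq_mul_inv _ (2 : ℝ)]
  rw [variance_mul_const, variance_fun_add hX hY]
  linarith

variable [IsProbabilityMeasure P] {X Y : Ω → ℝ}

lemma integral_sub_mul_sub_eq_covariance_add (hX : MemLp X 2 P) (hY : MemLp Y 2 P) (a b : ℝ) :
    ∫ ω, (X ω - a) * (Y ω - b) ∂P = cov[X, Y; P] + (P[X] - a) * (P[Y] - b) := by
  have hXi : Integrable X P := hX.integrable one_le_two
  have hYi : Integrable Y P := hY.integrable one_le_two
  have hXa : MemLp (fun ω => X ω - a) 2 P := hX.sub (memLp_const a)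
  have hYb : MemLp (fun ω => Y ω - b) 2 P := hY.sub (memLp_const b)
  have hcov : cov[fun ω => X ω - a, fun ω => Y ω - b; P] = cov[X, Y; P] := by
    rw [covariance_sub_const_left hXi, covariance_sub_const_right hYi]
  rw [← hcov, covariance_eq_sub hXa hYb, integral_sub hXi (integrable_const a),
    integral_sub hYi (integrable_const b)]
  simp

/-- Chebyshev's association inequality. -/
lemma covariance_nonpos_of_antivary (hX : MemLp X 2 P) (hY : MemLp Y 2 P) (hXY : Antivary X Y) :
    cov[X, Y; P] ≤ 0 := by
  have hpointwise (ω : Ω) : cov[X, Y; P] + (P[X] - X ω) * (P[Y] - Y ω) ≤ 0 := by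
    rw [← integral_sub_mul_sub_eq_covariance_add hX hY]
    exact integral_nonpos fun ω' => antivary_iff_forall_mul_nonpos.mp hXY ω ω'
  have hprod : Integrable (fun ω => (P[X] - X ω) * (P[Y] - Y ω)) P :=
    ((memLp_const P[X]).sub hX).integrable_mul ((memLp_const P[Y]).sub hY)
  have htwice : cov[X, Y; P] + cov[X, Y; P] ≤ 0 :=
    calc cov[X, Y; P] + cov[X, Y; P]
        = ∫ ω, (cov[X, Y; P] + (P[X] - X ω) * (P[Y] - Y ω)) ∂P := by
          rw [integral_add (integrable_const _) hprod, integral_const, probReal_univ, one_smul]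
          congr 1
          exact integral_congr_ae (Filter.Eventually.of_forall fun ω => by ring)
      _ ≤ 0 := integral_nonpos hpointwise
  linarith

end

theorem antithetic_variance_reduction_general {Ω α : Type*} [MeasurableSpace Ω]
    {P : Measure Ω} [IsProbabilityMeasure P]
    [LinearOrder α] [TopologicalSpace α] [OrderClosedTopology α] [MeasurableSpace α]
    [BorelSpace α] {Z Z' : Ω → α} (hident : IdentDistrib Z Z' P P)
    (hanti : Antivary Z Z') {g : α → ℝ} (hmono : Monotone g)
    (hg : MemLp (fun ω => g (Z ω)) 2 P) :
    Var[fun ω => (g (Z ω) + g (Z' ω)) / 2; P] ≤ (1 / 2) * Var[fun ω => g (Z ω); P] := by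
  have hident_g : IdentDistrib (fun ω => g (Z ω)) (fun ω => g (Z' ω)) P P :=
    hident.comp hmono.measurable
  have hg' : MemLp (fun ω => g (Z' ω)) 2 P := hident_g.memLp_snd hg
  have hanti_g : Antivary (fun ω => g (Z ω)) (fun ω => g (Z' ω)) :=
    ((hanti.comp_monotone_left hmono).symm.comp_monotone_left hmono).symm
  calc Var[fun ω => (g (Z ω) + g (Z' ω)) / 2; P]
      ≤ (Var[fun ω => g (Z ω); P] + Var[fun ω => g (Z' ω); P]) / 4 :=
        variance_add_div_two_le_of_covariance_nonpos hg hg'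
          (covariance_nonpos_of_antivary hg hg' hanti_g)
    _ = (1 / 2) * Var[fun ω => g (Z ω); P] := by
        rw [← hident_g.variance_eq]
        ring

theorem antithetic_variance_reduction {Ω : Type*} [MeasurableSpace Ω]
    (P : Measure Ω) [IsProbabilityMeasure P] (Z : Ω → ℝ) (hZm : Measurable Z)
    (hZ : P.map Z = gaussianReal 0 1)
    (g : ℝ → ℝ) (hg : ContDiff ℝ 2 g) (hmono : Monotone g)
    (h0 : PolyGrowth g) (h1 : PolyGrowth (deriv g)) (h2 : PolyGrowth (deriv (deriv g))) :
    variance (fun ω => (g (Z ω) + g (-Z ω)) / 2) P ≤ (1 / 2) * variance (fun ω => g (Z ω)) P := by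
  have hlaw : HasLaw Z (gaussianReal 0 1) P := ⟨hZm.aemeasurable, hZ⟩
  have hL2 : MemLp (fun ω => g (Z ω)) 2 P :=
    h0.memLp_comp (fun _ => hlaw.hasGaussianLaw.memLp)
      (hmono.measurable.comp hZm).aestronglyMeasurable ENNReal.ofNat_ne_top
  have hanti : Antivary Z (-Z) := fun _ _ hlt => (neg_lt_neg_iff.mp hlt).le
  exact antithetic_variance_reduction_general
    (identDistrib_neg_of_hasLaw_gaussianReal hlaw) hanti hmono hL2
end
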